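/- arXiv:2505.18826 — 3 statements merged into one kernel-verified Lean document; each statement's English description precedes it below -/
import Mathlib

section
/- Let j, m ∈ Fin n and let I, K ⊆ Fin n be finite sets with j ∉ I and m ∉ K. If either (I ∪ {j}) ∩ (K ∪ {m}) = ∅ or I ∪ {j} ⊆ K, then the Whitehead generators α_{I,j} and α_{K,m} commute in Aut(F_n): α_{I,j} ∘ α_{K,m} = α_{K,m} ∘ α_{I,j}. -/
/-- The Whitehead generator `α_{I,j} ∈ Aut(F_n)`: the automorphism of the free group
`FreeGroup (Fin n)` determined on the basis by `x i ↦ x j⁻¹ * x i * x j` for `i ∈ I`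
and `x i ↦ x i` for `i ∉ I`. -/
def whitehead (n : ℕ) (I : Finset (Fin n)) (j : Fin n) : MulAut (FreeGroup (Fin n)) :=
  MonoidHom.toMulEquiv
    (FreeGroup.lift (fun i : Fin n =>
      if i ∈ I then (FreeGroup.of j)⁻¹ * FreeGroup.of i * FreeGroup.of j
      else FreeGroup.of i))
    (FreeGroup.lift (fun i : Fin n =>
      if i ∈ I then FreeGroup.of j * FreeGroup.of i * (FreeGroup.of j)⁻¹
      else FreeGroup.of i))
    (by
      apply FreeGroup.ext_hom
      intro i
      by_cases hi : i ∈ I <;> by_cases hj : j ∈ I <;>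
        simp [hi, hj, FreeGroup.lift_apply_of] <;> group)
    (by
      apply FreeGroup.ext_hom
      intro i
      by_cases hi : i ∈ I <;> by_cases hj : j ∈ I <;>
        simp [hi, hj, FreeGroup.lift_apply_of] <;> group)

/-!
In both cases of the theorem `α_{K,m}` acts uniformly on `I ∪ {j}`, the basis elements involved in
`α_{I,j}`: it fixes all of them, or it conjugates all of them by `x m`; and `α_{I,j}` fixes `x m`.
If they are fixed, conjugation by `x j` and by `x m` take place on disjoint parts of the basis and
do not affect the conjugators. If they are conjugated, `x j⁻¹ x i x j` with `i ∈ I` is conjugated by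
`x m` as a whole, which is also what `α_{I,j}` makes of `x m⁻¹ x i x m`.
-/

section PartialConj

variable {α : Type*} {I K : Set α} {g h : FreeGroup α}

open Classical in
/-- The partial conjugation `x i ↦ g⁻¹ * x i * g` for `i ∈ I` and `x i ↦ x i` for `i ∉ I`: the
Whitehead generator with an arbitrary conjugator `g`. It need not be invertible, so it is
an endomorphism only. -/
noncomputable def partialConj (I : Set α) (g : FreeGroup α) : FreeGroup α →* FreeGroup α :=
  FreeGroup.lift fun i => if i ∈ I then g⁻¹ * FreeGroup.of i * g else FreeGroup.of i

theorem partialConj_of_mem {i : α} (hi : i ∈ I) :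
    partialConj I g (FreeGroup.of i) = g⁻¹ * FreeGroup.of i * g := by
  simp [partialConj, hi]

theorem partialConj_of_notMem {i : α} (hi : i ∉ I) :
    partialConj I g (FreeGroup.of i) = FreeGroup.of i := by
  simp [partialConj, hi]

theorem partialConj_comp_comm_of_disjoint (hIK : Disjoint I K)
    (hg : partialConj K h g = g) (hh : partialConj I g h = h) :
    (partialConj I g).comp (partialConj K h) = (partialConj K h).comp (partialConj I g) := by
  refine FreeGroup.ext_hom _ _ fun i => ?_
  simp only [MonoidHom.comp_apply]
  by_cases hiI : i ∈ I
  · have hiK : i ∉ K := hIK.notMem_of_mem_left hiI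
    simp only [partialConj_of_mem hiI, partialConj_of_notMem hiK, map_mul, map_inv, hg]
  · by_cases hiK : i ∈ K
    · simp only [partialConj_of_notMem hiI, partialConj_of_mem hiK, map_mul, map_inv, hh]
    · simp only [partialConj_of_notMem hiI, partialConj_of_notMem hiK]

theorem partialConj_comp_comm_of_subset (hIK : I ⊆ K)
    (hg : partialConj K h g = h⁻¹ * g * h) (hh : partialConj I g h = h) :
    (partialConj I g).comp (partialConj K h) = (partialConj K h).comp (partialConj I g) := by
  refine FreeGroup.ext_hom _ _ fun i => ?_
  simp only [MonoidHom.comp_apply]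
  by_cases hiI : i ∈ I
  · have hiK : i ∈ K := hIK hiI
    simp only [partialConj_of_mem hiI, partialConj_of_mem hiK, map_mul, map_inv, hg, hh]
    group
  · by_cases hiK : i ∈ K
    · simp only [partialConj_of_notMem hiI, partialConj_of_mem hiK, map_mul, map_inv, hh]
    · simp only [partialConj_of_notMem hiI, partialConj_of_notMem hiK]

theorem whitehead_comm_general {j m : α} (hmI : m ∉ I)
    (hIK : Disjoint (insert j I) K ∨ insert j I ⊆ K) :
    (partialConj I (FreeGroup.of j)).comp (partialConj K (FreeGroup.of m)) =
      (partialConj K (FreeGroup.of m)).comp (partialConj I (FreeGroup.of j)) := by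
  have hm := partialConj_of_notMem (g := FreeGroup.of j) hmI
  rcases hIK with hIK | hIK
  · obtain ⟨hjK, hIK⟩ := Set.disjoint_insert_left.mp hIK
    exact partialConj_comp_comm_of_disjoint hIK (partialConj_of_notMem hjK) hm
  · obtain ⟨hjK, hIK⟩ := Set.insert_subset_iff.mp hIK
    exact partialConj_comp_comm_of_subset hIK (partialConj_of_mem hjK) hm

end PartialConj

theorem whitehead_apply (n : ℕ) (I : Finset (Fin n)) (j : Fin n) (x : FreeGroup (Fin n)) :
    whitehead n I j x = partialConj (I : Set (Fin n)) (FreeGroup.of j) x := by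
  simp [whitehead, partialConj]

/-- If `j ∉ I`, `m ∉ K`, and either `(I ∪ {j}) ∩ (K ∪ {m}) = ∅` or
`I ∪ {j} ⊆ K`, then `α_{I,j}` and `α_{K,m}` commute in `Aut(F_n)`. -/
theorem whitehead_comm (n : ℕ) (j m : Fin n) (I K : Finset (Fin n))
    (hjI : j ∉ I) (hmK : m ∉ K)
    (h : (I ∪ {j}) ∩ (K ∪ {m}) = ∅ ∨ I ∪ {j} ⊆ K) :
    whitehead n I j * whitehead n K m = whitehead n K m * whitehead n I j := by
  rw [← Finset.disjoint_iff_inter_eq_empty, Finset.union_singleton, Finset.union_singleton,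
    Finset.disjoint_insert_right] at h
  have hmI : m ∉ (I : Set (Fin n)) := by grind
  have hIK : Disjoint (insert j (I : Set (Fin n))) K ∨ insert j (I : Set (Fin n)) ⊆ K := by
    exact_mod_cast h.imp_left And.right
  ext1 x
  simpa only [whitehead_apply, MulAut.mul_apply, MonoidHom.comp_apply] using
    DFunLike.congr_fun (whitehead_comm_general hmI hIK) x
end

section
/- Let j ∈ Fin n and let I ⊆ Fin n be a finite set with j ∉ I, and let I' = (Fin n \ {j}) \ I be its complement in Fin n \ {j}. Then the composition α_{I,j} ∘ α_{I',j} equals the inner automorphism of F_n given by w ↦ x_j⁻¹ · w · x_j. In particular, α_{Fin n \ {j}, j} is the inner automorphism w ↦ x_j⁻¹ · w · x_j. -/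
section Whitehead

open FreeGroup

theorem freeGroup_mulEquiv_ext {α M : Type*} [Monoid M] {f g : FreeGroup α ≃* M}
    (h : ∀ a, f (of a) = g (of a)) : f = g :=
  MulEquiv.toMonoidHom_injective (ext_hom _ _ h)

variable {n : ℕ} {I K : Finset (Fin n)} {j : Fin n}

theorem whitehead_apply_of (i : Fin n) :
    whitehead n I j (of i) = if i ∈ I then (of j)⁻¹ * of i * of j else of i :=
  lift_apply_of

theorem whitehead_apply_of_self : whitehead n I j (of j) = of j := by
  simp [whitehead_apply_of]

theorem whitehead_mul_whitehead_of_disjoint (hIK : Disjoint I K) :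
    whitehead n I j * whitehead n K j = whitehead n (I ∪ K) j := by
  refine freeGroup_mulEquiv_ext fun i => ?_
  rw [MulAut.mul_apply, whitehead_apply_of i (I := K)]
  by_cases hK : i ∈ K
  · have hI : i ∉ I := Finset.disjoint_right.mp hIK hK
    simp [whitehead_apply_of_self, whitehead_apply_of i, hI, hK]
  · simp [whitehead_apply_of, hK]

theorem whitehead_eq_conj_of_forall_ne_mem (hI : ∀ i ≠ j, i ∈ I) :
    whitehead n I j = MulAut.conj (of j)⁻¹ := by
  refine freeGroup_mulEquiv_ext fun i => ?_
  obtain rfl | hij := eq_or_ne i j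
  · simp [whitehead_apply_of_self]
  · simp [whitehead_apply_of, hI i hij]

end Whitehead

/-- For `j ∉ I` and `I' = (Fin n \ {j}) \ I`, the composition
`α_{I,j} ∘ α_{I',j}` is the inner automorphism `w ↦ x j⁻¹ * w * x j`; in particular
`α_{Fin n \ {j}, j}` is that inner automorphism. -/
theorem whitehead_complement_inner (n : ℕ) (j : Fin n) (I : Finset (Fin n))
    (hjI : j ∉ I) :
    whitehead n I j * whitehead n ((Finset.univ \ {j}) \ I) j
      = MulAut.conj (FreeGroup.of j)⁻¹ ∧
    whitehead n (Finset.univ \ {j}) j = MulAut.conj (FreeGroup.of j)⁻¹ := by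
  have hconj : whitehead n (Finset.univ \ {j}) j = MulAut.conj (FreeGroup.of j)⁻¹ :=
    whitehead_eq_conj_of_forall_ne_mem (by simp)
  have hsub : I ⊆ Finset.univ \ {j} := by simpa [Finset.subset_sdiff] using hjI
  refine ⟨?_, hconj⟩
  rw [whitehead_mul_whitehead_of_disjoint Finset.disjoint_sdiff,
    Finset.union_sdiff_of_subset hsub, hconj]
end

section
/- Let n ≥ 2 and let Q_n be the group given by the McCool presentation with the additional relators r_j = ∏_{i ≠ j} a_{ij} (product over i ∈ Fin n with i ≠ j in increasing order) for each j ∈ Fin n. Then the abelianization of Q_n is a free abelian group of rank n(n−2). -/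
open scoped commutatorElement

/-- The generator `a_{ij}` of the McCool presentation, as an element of the free
group on the set of ordered pairs of distinct indices. -/
def mcGen (n : ℕ) (i j : Fin n) (h : i ≠ j) :
    FreeGroup {p : Fin n × Fin n // p.1 ≠ p.2} :=
  FreeGroup.of ⟨(i, j), h⟩

/-- The defining relators of the McCool presentation: `[a_{ij}, a_{kl}]` for
`i, j, k, l` distinct, `[a_{ij}, a_{kj}]` for `i, j, k` distinct, and
`[a_{ij} * a_{kj}, a_{ik}]` for `i, j, k` distinct, where `[u,v] = u*v*u⁻¹*v⁻¹`. -/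
def mcCoolRels (n : ℕ) : Set (FreeGroup {p : Fin n × Fin n // p.1 ≠ p.2}) :=
  {r | ∃ (i j k l : Fin n) (hij : i ≠ j) (hkl : k ≠ l),
      i ≠ k ∧ i ≠ l ∧ j ≠ k ∧ j ≠ l ∧
      r = ⁅mcGen n i j hij, mcGen n k l hkl⁆} ∪
  {r | ∃ (i j k : Fin n) (hij : i ≠ j) (hkj : k ≠ j) (_hik : i ≠ k),
      r = ⁅mcGen n i j hij, mcGen n k j hkj⁆} ∪
  {r | ∃ (i j k : Fin n) (hij : i ≠ j) (hkj : k ≠ j) (hik : i ≠ k),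
      r = ⁅mcGen n i j hij * mcGen n k j hkj, mcGen n i k hik⁆}

/-- The additional relator `r_j = ∏_{i ≠ j} a_{ij}`, the product over `i ∈ Fin n`
with `i ≠ j` taken in increasing order. -/
def mcInnerRel (n : ℕ) (j : Fin n) : FreeGroup {p : Fin n × Fin n // p.1 ≠ p.2} :=
  ((List.finRange n).map (fun i => if h : i = j then 1 else mcGen n i j h)).prod

/-!
Abelianizing kills the McCool relators, which are commutators, so only the relations
`∑ i, a_{ij} = 0` survive. Viewing `ℤ`-combinations of the generators as functions on the
off-diagonal pairs, these relations span exactly the functions of `(i, j)` that depend on `j` alone.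
Choose `c j ≠ j` in each column. Subtracting from a function its value at `(c j, j)` identifies the
quotient with the functions on the pairs other than the `(c j, j)`, of which there are
`n(n - 1) - n = n(n - 2)`.
-/

section AbelianizedPresentation

variable {α M : Type*} [AddCommGroup M]

/-- The value in the additive group `M` of a word in the free group, each letter `a` being read
as `b a`. It computes the abelianized form of a relator. -/
def wordValue (b : α → M) : FreeGroup α →* Multiplicative M :=
  FreeGroup.lift fun a => Multiplicative.ofAdd (b a)

theorem map_wordValue {G : Type*} [Group G] (b : α → M) (f : Multiplicative M →* G)
    (r : FreeGroup α) :
    f (wordValue b r) = FreeGroup.lift (fun a => f (Multiplicative.ofAdd (b a))) r := by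
  have h : f.comp (wordValue b) = FreeGroup.lift fun a => f (Multiplicative.ofAdd (b a)) := by
    ext a
    simp [wordValue]
  exact DFunLike.congr_fun h r

/-- The subgroup of `M`, as a `ℤ`-submodule, spanned by the values of the words in `rels`: the
relations that `rels` imposes after abelianization. -/
def relationSubmodule (b : α → M) (rels : Set (FreeGroup α)) : Submodule ℤ M :=
  Submodule.span ℤ ((fun r => (wordValue b r).toAdd) '' rels)

theorem relationSubmodule_union (b : α → M) (rels rels' : Set (FreeGroup α)) :
    relationSubmodule b (rels ∪ rels') = relationSubmodule b rels ⊔ relationSubmodule b rels' := by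
  rw [relationSubmodule, Set.image_union, Submodule.span_union]
  rfl

theorem relationSubmodule_eq_bot_of_subset_commutatorSet (b : α → M) {rels : Set (FreeGroup α)}
    (h : rels ⊆ commutatorSet (FreeGroup α)) : relationSubmodule b rels = ⊥ := by
  rw [relationSubmodule, Submodule.span_eq_bot]
  rintro _ ⟨r, hr, rfl⟩
  obtain ⟨g₁, g₂, rfl⟩ := h hr
  change (wordValue b ⁅g₁, g₂⁆).toAdd = 0
  rw [map_commutatorElement, commutatorElement_eq_one_iff_mul_comm.2 (mul_comm _ _), toAdd_one]

/-- The homomorphism from an abelianized presented group to `M` modulo the abelianized relations,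
sending the generator `a` to the class of `b a`. -/
def abelianizationToQuotient (b : α → M) (rels : Set (FreeGroup α)) :
    Abelianization (PresentedGroup rels) →* Multiplicative (M ⧸ relationSubmodule b rels) :=
  let q := (relationSubmodule b rels).mkQ.toAddMonoidHom.toMultiplicative
  Abelianization.lift <| PresentedGroup.toGroup (f := fun a => q (Multiplicative.ofAdd (b a)))
    fun r hr => by
      rw [← map_wordValue]
      exact congrArg Multiplicative.ofAdd <|
        (Submodule.Quotient.mk_eq_zero _).2 (Submodule.subset_span ⟨r, hr, rfl⟩)

theorem abelianizationToQuotient_of_of (b : α → M) (rels : Set (FreeGroup α)) (a : α) :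
    abelianizationToQuotient b rels (Abelianization.of (PresentedGroup.of a)) =
      Multiplicative.ofAdd (Submodule.Quotient.mk (b a)) := by
  rw [abelianizationToQuotient, Abelianization.lift_apply_of, PresentedGroup.toGroup.of]
  rfl

/-- The homomorphism from the module with basis `b` to an abelianized presented group sending
`b a` to the generator `a`. -/
noncomputable def basisToAbelianization (b : Module.Basis α ℤ M) (rels : Set (FreeGroup α)) :
    M →ₗ[ℤ] Additive (Abelianization (PresentedGroup rels)) :=
  b.constr ℤ fun a => Additive.ofMul (Abelianization.of (PresentedGroup.of a))

theorem basisToAbelianization_basis (b : Module.Basis α ℤ M) (rels : Set (FreeGroup α)) (a : α) :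
    basisToAbelianization b rels (b a) =
      Additive.ofMul (Abelianization.of (PresentedGroup.of a)) :=
  b.constr_basis ℤ _ a

theorem basisToAbelianization_wordValue (b : Module.Basis α ℤ M) (rels : Set (FreeGroup α))
    (r : FreeGroup α) :
    basisToAbelianization b rels (wordValue b r).toAdd =
      Additive.ofMul (Abelianization.of (PresentedGroup.mk rels r)) := by
  let f := (basisToAbelianization b rels).toAddMonoidHom.toMultiplicativeLeft
  have hf : FreeGroup.lift (fun a => f (Multiplicative.ofAdd (b a))) =
      Abelianization.of.comp (PresentedGroup.mk rels) := by
    ext a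
    simp [f, basisToAbelianization_basis, PresentedGroup.of]
  exact congrArg Additive.ofMul <| (map_wordValue b f r).trans (DFunLike.congr_fun hf r)

theorem relationSubmodule_le_ker_basisToAbelianization (b : Module.Basis α ℤ M)
    (rels : Set (FreeGroup α)) :
    relationSubmodule b rels ≤ LinearMap.ker (basisToAbelianization b rels) := by
  rw [relationSubmodule, Submodule.span_le]
  rintro _ ⟨r, hr, rfl⟩
  change basisToAbelianization b rels (wordValue b r).toAdd = 0
  rw [basisToAbelianization_wordValue, PresentedGroup.one_of_mem hr, map_one, ofMul_one]

/-- The presentation of the abelianization of a presented group as a `ℤ`-module: the free module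
on the generators, given by any basis indexed by them, modulo the abelianized relators. -/
noncomputable def abelianizationPresentedGroupEquiv (b : Module.Basis α ℤ M)
    (rels : Set (FreeGroup α)) :
    Abelianization (PresentedGroup rels) ≃* Multiplicative (M ⧸ relationSubmodule b rels) :=
  MonoidHom.toMulEquiv (abelianizationToQuotient b rels)
    (Submodule.liftQ _ _
      (relationSubmodule_le_ker_basisToAbelianization b rels)).toAddMonoidHom.toMultiplicativeLeft
    (by
      apply Abelianization.hom_ext
      apply PresentedGroup.ext
      intro a
      simp [abelianizationToQuotient_of_of, basisToAbelianization_basis])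
    (by
      apply MonoidHom.toAdditiveRight.injective
      apply AddMonoidHom.toIntLinearMap_injective
      apply Submodule.linearMap_qext
      refine b.ext fun a => ?_
      have h : abelianizationToQuotient b rels (basisToAbelianization b rels (b a)).toMul =
          Multiplicative.ofAdd (Submodule.Quotient.mk (b a)) := by
        rw [basisToAbelianization_basis, toMul_ofMul, abelianizationToQuotient_of_of]
      exact congrArg Multiplicative.toAdd h)

end AbelianizedPresentation

section FiberwiseConstant

variable {α β : Type*} (R M : Type*) [Ring R] [AddCommGroup M] [Module R M]

/-- Fiberwise differences `f x - f (s (p x))` of a function `f` along `p`, where `s` is meant to be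
a section of `p`. The points of `range s` are left out, the difference being zero there. -/
def fiberwiseSub (p : α → β) (s : β → α) : (α → M) →ₗ[R] (↥(Set.range s)ᶜ → M) :=
  LinearMap.funLeft R M (fun x : ↥(Set.range s)ᶜ => (x : α)) -
    LinearMap.funLeft R M (fun x : ↥(Set.range s)ᶜ => s (p x))

variable {p : α → β} {s : β → α}

theorem ker_fiberwiseSub (h : Function.RightInverse s p) :
    LinearMap.ker (fiberwiseSub R M p s) = LinearMap.range (LinearMap.funLeft R M p) := by
  ext f
  constructor
  · intro hf
    refine ⟨f ∘ s, funext fun x => ?_⟩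
    by_cases hx : x ∈ Set.range s
    · obtain ⟨y, rfl⟩ := hx
      simp [LinearMap.funLeft_apply, h y]
    · exact (sub_eq_zero.1 (congrFun hf ⟨x, hx⟩)).symm
  · rintro ⟨g, rfl⟩
    ext x
    simp [fiberwiseSub, LinearMap.funLeft_apply, h (p x)]

theorem fiberwiseSub_surjective (p : α → β) (s : β → α) :
    Function.Surjective (fiberwiseSub R M p s) := by
  intro g
  refine ⟨Function.extend Subtype.val g 0, funext fun x => ?_⟩
  have hs : Function.extend Subtype.val g 0 (s (p x)) = 0 :=
    Function.extend_apply' _ _ _ fun ⟨y, hy⟩ => y.2 ⟨p x, hy.symm⟩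
  change Function.extend Subtype.val g 0 x.1 - Function.extend Subtype.val g 0 (s (p x)) = g x
  rw [hs, sub_zero, Subtype.val_injective.extend_apply]

/-- Functions modulo the fiberwise constant ones are functions off a section. -/
noncomputable def quotientRangeFunLeftEquiv (h : Function.RightInverse s p) :
    ((α → M) ⧸ LinearMap.range (LinearMap.funLeft R M p)) ≃ₗ[R] (↥(Set.range s)ᶜ → M) :=
  Submodule.quotEquivOfEq _ _ (ker_fiberwiseSub R M h).symm ≪≫ₗ
    (fiberwiseSub R M p s).quotKerEquivOfSurjective (fiberwiseSub_surjective R M p s)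

theorem range_funLeft_eq_span [Finite β] [DecidableEq β] (p : α → β) :
    LinearMap.range (LinearMap.funLeft R R p) =
      Submodule.span R (Set.range fun j => LinearMap.funLeft R R p (Pi.single j 1)) := by
  rw [LinearMap.range_eq_map, ← (Pi.basisFun R β).span_eq, Submodule.map_span, ← Set.range_comp]
  simp only [Function.comp_def, Pi.basisFun_apply]

end FiberwiseConstant

theorem card_subtype_fst_ne_snd (ι : Type*) [Fintype ι] [DecidableEq ι] :
    Fintype.card {p : ι × ι // p.1 ≠ p.2} = Fintype.card ι * (Fintype.card ι - 1) := by
  rw [Fintype.card_of_subtype Finset.univ.offDiag (by simp), Finset.offDiag_card,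
    Finset.card_univ, Nat.mul_sub_one]

theorem card_compl_range_of_injective {α β : Type*} [Finite α] {f : β → α}
    (hf : Function.Injective f) : Nat.card ↥(Set.range f)ᶜ = Nat.card α - Nat.card β := by
  rw [Nat.card_coe_set_eq, Set.ncard_compl, ← Nat.card_coe_set_eq, Nat.card_range_of_injective hf]

theorem card_compl_range_offDiag {ι : Type*} [Finite ι] {s : ι → {p : ι × ι // p.1 ≠ p.2}}
    (hs : Function.Injective s) :
    Nat.card ↥(Set.range s)ᶜ = Nat.card ι * (Nat.card ι - 2) := by
  classical
  have := Fintype.ofFinite ι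
  rw [card_compl_range_of_injective hs, Nat.card_eq_fintype_card, Nat.card_eq_fintype_card,
    card_subtype_fst_ne_snd, ← Nat.mul_sub_one, Nat.sub_sub]

theorem mcCoolRels_subset_commutatorSet (n : ℕ) :
    mcCoolRels n ⊆ commutatorSet (FreeGroup {p : Fin n × Fin n // p.1 ≠ p.2}) := by
  rintro _ ((⟨i, j, k, l, hij, hkl, -, -, -, -, rfl⟩ | ⟨i, j, k, hij, hkj, -, rfl⟩) |
    ⟨i, j, k, hij, hkj, hik, rfl⟩) <;>
  exact commutator_mem_commutatorSet _ _

/-- The column index `j` of the generator `a_{ij}`, whose fiber over `j` is the set of letters of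
the relator `r_j`. -/
def mcColumn (n : ℕ) (x : {p : Fin n × Fin n // p.1 ≠ p.2}) : Fin n :=
  x.1.2

theorem wordValue_mcInnerRel {M : Type*} [AddCommGroup M] {n : ℕ}
    (b : {p : Fin n × Fin n // p.1 ≠ p.2} → M) (j : Fin n) :
    (wordValue b (mcInnerRel n j)).toAdd = ∑ i, if h : i = j then 0 else b ⟨(i, j), h⟩ := by
  rw [mcInnerRel, map_list_prod, ← List.ofFn_eq_map, List.map_ofFn, List.prod_ofFn, toAdd_prod]
  refine Finset.sum_congr rfl fun i _ => ?_
  by_cases h : i = j <;> simp [h, wordValue, mcGen]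

theorem wordValue_basisFun_mcInnerRel {n : ℕ} (j : Fin n) :
    (wordValue (Pi.basisFun ℤ _) (mcInnerRel n j)).toAdd =
      LinearMap.funLeft ℤ ℤ (mcColumn n) (Pi.single j 1) := by
  ext ⟨⟨k, l⟩, hkl⟩
  have hterm (i : Fin n) :
      (if h : i = j then 0 else Pi.basisFun ℤ {p : Fin n × Fin n // p.1 ≠ p.2} ⟨(i, j), h⟩)
        ⟨(k, l), hkl⟩ = if i = k then (Pi.single j 1 : Fin n → ℤ) l else 0 := by
    by_cases h : i = j
    · rw [dif_pos h, Pi.zero_apply, Pi.single_apply]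
      grind
    · rw [dif_neg h, Pi.basisFun_apply, Pi.single_apply, Pi.single_apply]
      grind
  rw [wordValue_mcInnerRel, Finset.sum_apply, Finset.sum_congr rfl fun i _ => hterm i]
  simp [LinearMap.funLeft_apply, mcColumn]

theorem relationSubmodule_mcCool (n : ℕ) :
    relationSubmodule (Pi.basisFun ℤ _) (mcCoolRels n ∪ {r | ∃ j : Fin n, r = mcInnerRel n j}) =
      LinearMap.range (LinearMap.funLeft ℤ ℤ (mcColumn n)) := by
  have hrange : {r | ∃ j : Fin n, r = mcInnerRel n j} = Set.range (mcInnerRel n) := by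
    simp only [Set.range, eq_comm]
  rw [relationSubmodule_union,
    relationSubmodule_eq_bot_of_subset_commutatorSet _ (mcCoolRels_subset_commutatorSet n),
    bot_sup_eq, range_funLeft_eq_span, hrange, relationSubmodule, ← Set.range_comp]
  simp only [Function.comp_def, wordValue_basisFun_mcInnerRel]

theorem exists_rightInverse_mcColumn {n : ℕ} (hn : 2 ≤ n) :
    ∃ s, Function.RightInverse s (mcColumn n) := by
  have : Nontrivial (Fin n) := Fin.nontrivial_iff_two_le.2 hn
  choose c hc using fun j : Fin n => exists_ne j
  exact ⟨fun j => ⟨(c j, j), hc j⟩, fun _ => rfl⟩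

/-- For `n ≥ 2`, the abelianization of the group `Q_n` given by the
McCool presentation together with the relators `r_j = ∏_{i ≠ j} a_{ij}` (`j ∈ Fin n`)
is free abelian of rank `n(n-2)`. -/
theorem mcCoolOuter_abelianization (n : ℕ) (hn : 2 ≤ n) :
    Nonempty (Abelianization
        (PresentedGroup (mcCoolRels n ∪ {r | ∃ j : Fin n, r = mcInnerRel n j})) ≃*
      Multiplicative (Fin (n * (n - 2)) → ℤ)) := by
  obtain ⟨s, hs⟩ := exists_rightInverse_mcColumn hn
  let relationsEquiv := Submodule.quotEquivOfEq _ _ (relationSubmodule_mcCool n)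
  let offSectionEquiv := quotientRangeFunLeftEquiv ℤ ℤ hs
  have hcard : Nat.card ↥(Set.range s)ᶜ = n * (n - 2) := by
    simpa using card_compl_range_offDiag hs.injective
  let coordinateEquiv := LinearEquiv.funCongrLeft ℤ ℤ (Finite.equivFinOfCardEq hcard).symm
  exact ⟨(abelianizationPresentedGroupEquiv _ _).trans <|
    (relationsEquiv ≪≫ₗ offSectionEquiv ≪≫ₗ coordinateEquiv).toAddEquiv.toMultiplicative⟩
end
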